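/- Let Φ be an m×N matrix with unit-norm columns, mutual coherence μ and mean square coherence μ̄². Let a ∈ (0,1), β > 0 and α < β log₂ e. If μ⁴ ≤ (1-a)²α³/(32βk) and k μ̄² ≤ aα, then for a uniformly random pair (I, j) with I a k-subset of [N] and j ∉ I, P(∑_{l∈I}⟨φ_l,φ_j⟩² ≥ α) ≤ 2e^{-β/α}. -/

import Mathlib

/-! The argument is a Chernoff bound for sampling without replacement, carried out for each `j`
separately. Fix `j`, put `x l = ⟨φ_l, φ_j⟩² ∈ [0, μ²]` for `l ≠ j`, and let `I` be a uniform
`k`-subset of the remaining `n = N - 1` indices. The exponential moment of `∑_{l ∈ I} x l` is the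
normalised elementary symmetric sum `e_k(y) / C(n, k)` of the numbers `y l = exp (λ x l)`, so
Maclaurin's inequality `e_k(y) / C(n, k) ≤ (e_1(y) / n) ^ k` (`maclaurin`) reduces it to independent
sampling. A form of Hoeffding's lemma (`sum_exp_le`, obtained by symmetrisation from
`cosh u ≤ exp (u² / 2)`) bounds `e_1(y) / n` by `exp (λ x̄ + λ² μ⁴ / 2)`, where `x̄` is the mean
of `x`. Since `k x̄ ≤ a α`, Markov's inequality with `λ = 2β / ((1 - a) α²)` gives the bound
`exp (-β / α)` for each `j`; summing over `j` proves the claim, without needing the factor `2`.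

Maclaurin's inequality itself follows by induction from
`(k + 1) e_{k+1} = e_1 e_k - ∑ i, y i * w i`, where `w i = ∑_{I ∋ i} ∏_{l ∈ I} y l`, together with
Chebyshev's sum inequality: `w i` is an increasing function of `y i`, and `∑ i, w i = k e_k`. -/

open scoped Classical

/-! ### Elementary symmetric sums and Maclaurin's inequality -/

/-- The `k`-th elementary symmetric sum of the numbers `y l`, `l ∈ s`. -/
noncomputable def symSum {ι : Type*} (s : Finset ι) (y : ι → ℝ) (k : ℕ) : ℝ :=
  ∑ I ∈ s.powersetCard k, ∏ l ∈ I, y l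

/-- The part of `symSum s y k` carried by the `k`-subsets that contain `i`. -/
noncomputable def symSumAt {ι : Type*} (s : Finset ι) (y : ι → ℝ) (k : ℕ) (i : ι) : ℝ :=
  ∑ I ∈ (s.powersetCard k).filter (fun I => i ∈ I), ∏ l ∈ I, y l

/-- Exchanging `i` and `j` matches the subsets containing `j` with those containing `i`, and does
not decrease the product when `y j ≤ y i`. -/
lemma symSumAt_mono {ι : Type*} (s : Finset ι) (y : ι → ℝ) (hy : ∀ i, 0 ≤ y i) (k : ℕ)
    {i j : ι} (hi : i ∈ s) (hj : j ∈ s) (hij : y j ≤ y i) :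
    symSumAt s y k j ≤ symSumAt s y k i := by
  have hsw : ∀ l ∈ s, Equiv.swap i j l ∈ s := by
    intro l hl
    rw [Equiv.swap_apply_def]
    split_ifs <;> assumption
  have hinv : ∀ I : Finset ι, (I.image (Equiv.swap i j)).image (Equiv.swap i j) = I := by
    intro I
    rw [Finset.image_image]
    have : (Equiv.swap i j : ι → ι) ∘ Equiv.swap i j = id := by ext l; simp
    rw [this, Finset.image_id]
  have hmem : ∀ (p q : ι), Equiv.swap i j p = q →
      ∀ I ∈ (s.powersetCard k).filter (fun I => p ∈ I), I.image (Equiv.swap i j) ∈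
        (s.powersetCard k).filter (fun I => q ∈ I) := by
    intro p q hpq I hI
    rw [Finset.mem_filter, Finset.mem_powersetCard] at hI ⊢
    refine ⟨⟨?_, ?_⟩, ?_⟩
    · intro l hl
      obtain ⟨l', hl', rfl⟩ := Finset.mem_image.1 hl
      exact hsw _ (hI.1.1 hl')
    · rw [Finset.card_image_of_injective _ (Equiv.swap i j).injective, hI.1.2]
    · exact Finset.mem_image.2 ⟨p, hI.2, hpq⟩
  have key : symSumAt s y k j =
      ∑ I ∈ (s.powersetCard k).filter (fun I => i ∈ I), ∏ l ∈ I, y (Equiv.swap i j l) := by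
    refine Finset.sum_nbij' (fun I => I.image (Equiv.swap i j))
      (fun I => I.image (Equiv.swap i j)) (hmem j i (by simp)) (hmem i j (by simp))
      (fun I _ => hinv I) (fun I _ => hinv I) ?_
    intro I _
    rw [Finset.prod_image (fun _ _ _ _ h => (Equiv.swap i j).injective h)]
    simp
  rw [key]
  refine Finset.sum_le_sum fun I hI => ?_
  have hiI := (Finset.mem_filter.1 hI).2
  by_cases hjI : j ∈ I
  · refine le_of_eq (Finset.prod_nbij' (Equiv.swap i j) (Equiv.swap i j) ?_ ?_ ?_ ?_ ?_)
    · intro l hl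
      rw [Equiv.swap_apply_def]
      split_ifs <;> assumption
    · intro l hl
      rw [Equiv.swap_apply_def]
      split_ifs <;> assumption
    all_goals simp
  · refine Finset.prod_le_prod (fun _ _ => hy _) fun l hl => ?_
    by_cases h : l = i
    · subst h; simpa using hij
    · rw [Equiv.swap_apply_of_ne_of_ne h (fun h' => hjI (by rwa [h'] at hl))]

lemma sum_mul_symSumAt {ι : Type*} (s : Finset ι) (y f : ι → ℝ) (k : ℕ) :
    ∑ i ∈ s, f i * symSumAt s y k i =
      ∑ I ∈ s.powersetCard k, (∑ i ∈ I, f i) * ∏ l ∈ I, y l := by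
  simp only [symSumAt, Finset.mul_sum, Finset.sum_mul]
  refine Finset.sum_comm' fun i I => ?_
  simp only [Finset.mem_filter, Finset.mem_powersetCard]
  constructor
  · tauto
  · rintro ⟨hi, hI⟩
    exact ⟨hI.1 hi, hI, hi⟩

lemma succ_mul_symSum {ι : Type*} (s : Finset ι) (y : ι → ℝ) (k : ℕ) :
    ((k : ℝ) + 1) * symSum s y (k + 1) =
      ∑ I ∈ s.powersetCard k, (∑ i ∈ s \ I, y i) * ∏ l ∈ I, y l := by
  have h : ((k : ℝ) + 1) * symSum s y (k + 1) =
      ∑ J ∈ s.powersetCard (k + 1), ∑ i ∈ J, ∏ l ∈ J, y l := by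
    rw [symSum, Finset.mul_sum]
    refine Finset.sum_congr rfl fun J hJ => ?_
    rw [Finset.sum_const, (Finset.mem_powersetCard.1 hJ).2, nsmul_eq_mul]
    push_cast; ring
  rw [h]
  simp only [Finset.sum_mul]
  rw [Finset.sum_sigma', Finset.sum_sigma']
  refine Finset.sum_bij' (fun p _ => ⟨p.1.erase p.2, p.2⟩) (fun p _ => ⟨insert p.2 p.1, p.2⟩)
    ?_ ?_ ?_ ?_ ?_
  · rintro ⟨J, i⟩ hp
    simp only [Finset.mem_sigma, Finset.mem_powersetCard, Finset.mem_sdiff] at hp ⊢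
    refine ⟨⟨(Finset.erase_subset _ _).trans hp.1.1, ?_⟩, hp.1.1 hp.2, by simp⟩
    rw [Finset.card_erase_of_mem hp.2, hp.1.2]; simp
  · rintro ⟨I, i⟩ hp
    simp only [Finset.mem_sigma, Finset.mem_powersetCard, Finset.mem_sdiff] at hp ⊢
    refine ⟨⟨Finset.insert_subset hp.2.1 hp.1.1, ?_⟩, by simp⟩
    rw [Finset.card_insert_of_notMem hp.2.2, hp.1.2]
  · rintro ⟨J, i⟩ hp
    simp only [Finset.mem_sigma] at hp
    simp [Finset.insert_erase hp.2]
  · rintro ⟨I, i⟩ hp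
    simp only [Finset.mem_sigma, Finset.mem_sdiff] at hp
    simp [Finset.erase_insert hp.2.2]
  · rintro ⟨J, i⟩ hp
    simp only [Finset.mem_sigma] at hp
    exact (Finset.mul_prod_erase J y hp.2).symm

/-- The inductive step of Maclaurin's inequality, from Chebyshev's sum inequality. -/
lemma symSum_succ_le {ι : Type*} (s : Finset ι) (y : ι → ℝ) (hy : ∀ i, 0 ≤ y i) (k : ℕ) :
    (s.card : ℝ) * (((k : ℝ) + 1) * symSum s y (k + 1)) ≤
      ((s.card : ℝ) - k) * ((∑ i ∈ s, y i) * symSum s y k) := by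
  have hmono : MonovaryOn y (symSumAt s y k) s := by
    intro i hi j hj hlt
    by_contra hcon
    exact absurd (symSumAt_mono s y hy k hi hj (not_le.1 hcon).le) (not_le.2 hlt)
  have hcheb := hmono.sum_mul_sum_le_card_mul_sum
  have hw : ∑ i ∈ s, symSumAt s y k i = k * symSum s y k := by
    have := sum_mul_symSumAt s y (fun _ => 1) k
    simp only [one_mul] at this
    rw [this, symSum, Finset.mul_sum]
    refine Finset.sum_congr rfl fun I hI => ?_
    rw [Finset.sum_const, (Finset.mem_powersetCard.1 hI).2]; simp
  have hsplit : ((k : ℝ) + 1) * symSum s y (k + 1) + ∑ i ∈ s, y i * symSumAt s y k i =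
      (∑ i ∈ s, y i) * symSum s y k := by
    rw [succ_mul_symSum, sum_mul_symSumAt, ← Finset.sum_add_distrib, symSum, Finset.mul_sum]
    refine Finset.sum_congr rfl fun I hI => ?_
    rw [← add_mul, Finset.sum_sdiff (Finset.mem_powersetCard.1 hI).1]
  rw [hw] at hcheb
  linear_combination hcheb + (s.card : ℝ) * hsplit

/-- Maclaurin's inequality between the `k`-th and the first normalised symmetric sums. -/
lemma maclaurin {ι : Type*} (s : Finset ι) (hs : 0 < s.card) (y : ι → ℝ) (hy : ∀ i, 0 ≤ y i)
    (k : ℕ) (hk : k ≤ s.card) :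
    symSum s y k ≤ (s.card.choose k : ℝ) * ((∑ i ∈ s, y i) / s.card) ^ k := by
  have hn : (0 : ℝ) < s.card := by exact_mod_cast hs
  induction k with
  | zero => simp [symSum]
  | succ k ih =>
    have ih := ih (by omega)
    have hstep := symSum_succ_le s y hy k
    have hA : 0 ≤ ∑ i ∈ s, y i := Finset.sum_nonneg fun _ _ => hy _
    have hk1 : (0 : ℝ) < (k : ℝ) + 1 := by positivity
    have hnk : (0 : ℝ) ≤ (s.card : ℝ) - k := by
      have : (k : ℝ) ≤ s.card := by exact_mod_cast (by omega : k ≤ s.card)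
      linarith
    have hch : (s.card.choose (k + 1) : ℝ) * ((k : ℝ) + 1) =
        (s.card.choose k : ℝ) * ((s.card : ℝ) - k) := by
      rw [← Nat.cast_sub (by omega : k ≤ s.card)]
      exact_mod_cast Nat.choose_succ_right_eq s.card k
    have h3 := mul_le_mul_of_nonneg_left (mul_le_mul_of_nonneg_left ih hA) hnk
    have h4 := hstep.trans h3
    refine le_of_mul_le_mul_left ?_ (mul_pos hn hk1)
    calc (s.card : ℝ) * ((k : ℝ) + 1) * symSum s y (k + 1)
        ≤ ((s.card : ℝ) - k) * ((∑ i ∈ s, y i) *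
            ((s.card.choose k : ℝ) * ((∑ i ∈ s, y i) / s.card) ^ k)) := by linarith
      _ = ((s.card.choose k : ℝ) * ((s.card : ℝ) - k)) * s.card *
            ((∑ i ∈ s, y i) / s.card) ^ (k + 1) := by
          rw [pow_succ]; field_simp
      _ = _ := by rw [← hch]; ring

/-! ### Exponential moments and the Chernoff bound -/

/-- Hoeffding's lemma for the uniform distribution on `s`, with constant `1/2` in place of `1/8`.
The symmetrised double sum `∑ exp (c (x i - x j)) = ∑ cosh (c (x i - x j))` is at most
`n² exp (c² M² / 2)`, while `∑ exp (-c x j) ≥ n exp (-c x̄)` by Jensen's inequality. -/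
lemma sum_exp_le {ι : Type*} (s : Finset ι) (x : ι → ℝ) (M c mean : ℝ)
    (hx0 : ∀ i ∈ s, 0 ≤ x i) (hxM : ∀ i ∈ s, x i ≤ M)
    (hmean : ∑ i ∈ s, x i = s.card * mean) :
    ∑ i ∈ s, Real.exp (c * x i) ≤ s.card * Real.exp (c * mean + c ^ 2 * M ^ 2 / 2) := by
  rcases s.eq_empty_or_nonempty with rfl | hne
  · simp
  have hn : (0 : ℝ) < s.card := by exact_mod_cast hne.card_pos
  have hlow : (s.card : ℝ) * Real.exp (-(c * mean)) ≤ ∑ i ∈ s, Real.exp (-(c * x i)) := by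
    have h : ∀ i ∈ s, Real.exp (-(c * mean)) * (c * mean - c * x i + 1) ≤
        Real.exp (-(c * x i)) := by
      intro i _
      have h1 := Real.add_one_le_exp (c * mean - c * x i)
      calc _ ≤ Real.exp (-(c * mean)) * Real.exp (c * mean - c * x i) :=
            mul_le_mul_of_nonneg_left h1 (Real.exp_pos _).le
        _ = _ := by rw [← Real.exp_add]; congr 1; ring
    refine le_trans (le_of_eq ?_) (Finset.sum_le_sum h)
    rw [← Finset.mul_sum, Finset.sum_add_distrib, Finset.sum_sub_distrib, ← Finset.mul_sum (f := x), hmean]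
    simp; ring
  have hprod : (∑ i ∈ s, Real.exp (c * x i)) * (∑ j ∈ s, Real.exp (-(c * x j))) =
      ∑ i ∈ s, ∑ j ∈ s, Real.exp (c * x i - c * x j) := by
    rw [Finset.sum_mul_sum]
    refine Finset.sum_congr rfl fun i _ => Finset.sum_congr rfl fun j _ => ?_
    rw [← Real.exp_add]; rfl
  have hcosh : ∑ i ∈ s, ∑ j ∈ s, Real.exp (c * x i - c * x j) =
      ∑ i ∈ s, ∑ j ∈ s, Real.cosh (c * x i - c * x j) := by
    have hc := Finset.sum_comm (s := s) (t := s) (f := fun i j => Real.exp (c * x i - c * x j))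
    have : ∑ i ∈ s, ∑ j ∈ s, Real.cosh (c * x i - c * x j) =
        (∑ i ∈ s, ∑ j ∈ s, Real.exp (c * x i - c * x j) +
          ∑ i ∈ s, ∑ j ∈ s, Real.exp (c * x j - c * x i)) / 2 := by
      simp only [← Finset.sum_add_distrib, Finset.sum_div]
      refine Finset.sum_congr rfl fun i _ => Finset.sum_congr rfl fun j _ => ?_
      rw [Real.cosh_eq, neg_sub]
    rw [this]; linarith
  have hup : ∑ i ∈ s, ∑ j ∈ s, Real.cosh (c * x i - c * x j) ≤
      (s.card : ℝ) * (s.card * Real.exp (c ^ 2 * M ^ 2 / 2)) := by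
    rw [← nsmul_eq_mul, ← nsmul_eq_mul]
    refine Finset.sum_le_card_nsmul _ _ _ fun i hi => Finset.sum_le_card_nsmul _ _ _ fun j hj => ?_
    refine (Real.cosh_le_exp_half_sq _).trans (Real.exp_le_exp.2 ?_)
    have h1 : (x i - x j) ^ 2 ≤ M ^ 2 := by
      apply sq_le_sq'
      · linarith [hx0 i hi, hxM j hj]
      · linarith [hx0 j hj, hxM i hi]
    have h2 := mul_le_mul_of_nonneg_left h1 (sq_nonneg c)
    nlinarith
  have hA : 0 ≤ ∑ i ∈ s, Real.exp (c * x i) := Finset.sum_nonneg fun _ _ => (Real.exp_pos _).le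
  have h5 : (∑ i ∈ s, Real.exp (c * x i)) * (s.card * Real.exp (-(c * mean))) ≤
      (s.card : ℝ) * (s.card * Real.exp (c ^ 2 * M ^ 2 / 2)) :=
    (mul_le_mul_of_nonneg_left hlow hA).trans (by rw [hprod, hcosh]; exact hup)
  have hpos : 0 < (s.card : ℝ) * Real.exp (-(c * mean)) := mul_pos hn (Real.exp_pos _)
  refine le_of_mul_le_mul_right (h5.trans (le_of_eq ?_)) hpos
  have : Real.exp (c ^ 2 * M ^ 2 / 2) =
      Real.exp (c * mean + c ^ 2 * M ^ 2 / 2) * Real.exp (-(c * mean)) := by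
    rw [← Real.exp_add]; congr 1; ring
  rw [this]; ring

/-- Chernoff bound for a uniform `k`-subset of `s`: Markov's inequality for
`exp (c * ∑ l ∈ I, x l)`, combined with Maclaurin's inequality and Hoeffding's lemma. -/
lemma card_filter_le {ι : Type*} (s : Finset ι) (hs : 0 < s.card) (x : ι → ℝ) (M c mean α : ℝ)
    (hc : 0 ≤ c) (hx0 : ∀ i ∈ s, 0 ≤ x i) (hxM : ∀ i ∈ s, x i ≤ M)
    (hmean : ∑ i ∈ s, x i = s.card * mean) (k : ℕ) (hk : k ≤ s.card) :
    (((s.powersetCard k).filter (fun I => α ≤ ∑ l ∈ I, x l)).card : ℝ) ≤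
      (s.card.choose k : ℝ) * Real.exp (k * (c * mean + c ^ 2 * M ^ 2 / 2) - c * α) := by
  have hn : (0 : ℝ) < s.card := by exact_mod_cast hs
  have hmarkov : (((s.powersetCard k).filter (fun I => α ≤ ∑ l ∈ I, x l)).card : ℝ) *
      Real.exp (c * α) ≤ symSum s (fun i => Real.exp (c * x i)) k := by
    rw [← nsmul_eq_mul]
    refine (Finset.card_nsmul_le_sum _ (fun I => ∏ l ∈ I, Real.exp (c * x l)) _ ?_).trans
      (Finset.sum_le_sum_of_subset_of_nonneg (Finset.filter_subset _ _)
        fun _ _ _ => Finset.prod_nonneg fun _ _ => (Real.exp_pos _).le)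
    intro I hI
    rw [← Real.exp_sum, ← Finset.mul_sum]
    exact Real.exp_le_exp.2 (mul_le_mul_of_nonneg_left (Finset.mem_filter.1 hI).2 hc)
  have hmac := maclaurin s hs (fun i => Real.exp (c * x i)) (fun _ => (Real.exp_pos _).le) k hk
  have havg : (∑ i ∈ s, Real.exp (c * x i)) / s.card ≤
      Real.exp (c * mean + c ^ 2 * M ^ 2 / 2) := by
    rw [div_le_iff₀ hn, mul_comm]
    exact sum_exp_le s x M c mean hx0 hxM hmean
  have hpow : ((∑ i ∈ s, Real.exp (c * x i)) / s.card) ^ k ≤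
      Real.exp (k * (c * mean + c ^ 2 * M ^ 2 / 2)) := by
    rw [Real.exp_nat_mul]
    exact pow_le_pow_left₀
      (div_nonneg (Finset.sum_nonneg fun _ _ => (Real.exp_pos _).le) hn.le) havg k
  rw [Real.exp_sub, ← mul_div_assoc, le_div_iff₀ (Real.exp_pos _)]
  exact hmarkov.trans (hmac.trans (mul_le_mul_of_nonneg_left hpow (Nat.cast_nonneg _)))

/-! ### Counting pairs and the coherence bound -/

/-- Pairs `(I, j)` with `j ∉ I` satisfying `P`, counted by their second component. -/
lemma card_pairs (N k : ℕ) (P : Finset (Fin N) → Fin N → Prop) [∀ I j, Decidable (P I j)] :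
    ((((Finset.univ : Finset (Fin N)).powersetCard k).sigma
      (fun I => (Finset.univ : Finset (Fin N)) \ I)).filter (fun p : (_ : Finset (Fin N)) × Fin N => P p.1 p.2)).card =
    ∑ j : Fin N, (((Finset.univ.erase j).powersetCard k).filter (fun I => P I j)).card := by
  rw [← Finset.card_sigma]
  refine Finset.card_bij' (fun p _ => ⟨p.2, p.1⟩) (fun p _ => ⟨p.2, p.1⟩) ?_ ?_ ?_ ?_
  · rintro ⟨I, j⟩ hp
    simp only [Finset.mem_filter, Finset.mem_sigma, Finset.mem_powersetCard, Finset.mem_sdiff,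
      Finset.mem_univ, true_and, Finset.subset_erase] at hp ⊢
    exact ⟨⟨⟨Finset.subset_univ _, hp.1.2⟩, hp.1.1.2⟩, hp.2⟩
  · rintro ⟨j, I⟩ hp
    simp only [Finset.mem_filter, Finset.mem_sigma, Finset.mem_powersetCard, Finset.mem_sdiff,
      Finset.mem_univ, true_and, Finset.subset_erase] at hp ⊢
    exact ⟨⟨⟨Finset.subset_univ _, hp.1.2⟩, hp.1.1.2⟩, hp.2⟩
  · intros; rfl
  · intros; rfl

lemma card_all_pairs (N k : ℕ) :
    (((Finset.univ : Finset (Fin N)).powersetCard k).sigma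
      (fun I => (Finset.univ : Finset (Fin N)) \ I)).card =
    ∑ j : Fin N, ((Finset.univ.erase j).powersetCard k).card := by
  have h := card_pairs N k (fun _ _ => True)
  rw [Finset.filter_true_of_mem (fun _ _ => trivial)] at h
  rw [h]
  refine Finset.sum_congr rfl fun j _ => ?_
  rw [Finset.filter_true_of_mem (fun _ _ => trivial)]

/-- Corollary: if `μ⁴ ≤ (1-a)²α³/(32βk)` and `k μ̄² ≤ aα` with `α < β log₂ e`, then
for a uniformly random pair `(I, j)` with `I` a `k`-subset and `j ∉ I`,
`P(∑_{l ∈ I} ⟨φ_l, φ_j⟩² ≥ α) ≤ 2 e^{-β/α}`.  Probability is expressed by counting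
pairs `(I, j)`. -/
theorem stmt_13 (m N k : ℕ) (hk : 2 * k + 2 < N)
    (φ : Fin N → Fin m → ℝ) (hcol : ∀ i, ∑ t, φ i t ^ 2 = 1)
    (μc μbarsq a β α : ℝ)
    (hμ_ub : ∀ i l : Fin N, i ≠ l → |∑ t, φ i t * φ l t| ≤ μc)
    (hμ2_ub : ∀ j : Fin N,
      (1 / ((N : ℝ) - 1)) * ∑ i ∈ Finset.univ.erase j, (∑ t, φ i t * φ j t) ^ 2 ≤ μbarsq)
    (ha0 : 0 < a) (ha1 : a < 1) (hβ : 0 < β) (hα : 0 < α)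
    (hαβ : α < β / Real.log 2)
    (h1 : μc ^ 4 ≤ (1 - a) ^ 2 * α ^ 3 / (32 * β * k))
    (h2 : (k : ℝ) * μbarsq ≤ a * α) :
    (((((Finset.univ : Finset (Fin N)).powersetCard k).sigma
          (fun I => (Finset.univ : Finset (Fin N)) \ I)).filter
        (fun p => α ≤ ∑ l ∈ p.1, (∑ t, φ l t * φ p.2 t) ^ 2)).card : ℝ)
      ≤ 2 * Real.exp (-β / α) *
        (((((Finset.univ : Finset (Fin N)).powersetCard k).sigma
            (fun I => (Finset.univ : Finset (Fin N)) \ I)).card : ℝ)) := by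
  have hN1 : (0 : ℝ) < (N : ℝ) - 1 := by
    have : (2 : ℝ) < N := by exact_mod_cast (by omega : 2 < N)
    linarith
  have hcard : ∀ j : Fin N, (Finset.univ.erase j).card = N - 1 := by
    intro j; rw [Finset.card_erase_of_mem (Finset.mem_univ _)]; simp
  have hcardR : ((N - 1 : ℕ) : ℝ) = (N : ℝ) - 1 := by
    rw [Nat.cast_sub (by omega)]; simp
  have hkμ : (k : ℝ) * μc ^ 4 ≤ (1 - a) ^ 2 * α ^ 3 / (32 * β) := by
    rcases Nat.eq_zero_or_pos k with rfl | hkpos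
    · simp only [Nat.cast_zero, zero_mul]; positivity
    · have hkR : (0 : ℝ) < k := by exact_mod_cast hkpos
      rw [le_div_iff₀ (by positivity)] at h1 ⊢
      linarith
  have ha' : 0 < 1 - a := by linarith
  -- With `t = (1 - a) α`, this `c = 2β / (α t)` makes the linear term of the Chernoff exponent
  -- `-2β / α` and the quadratic one at most `β / (16 α)`; it makes sense also when `μ = 0`.
  set c : ℝ := 2 * β / ((1 - a) * α ^ 2) with hcdef
  have hc : 0 < c := by positivity
  have hquad : (k : ℝ) * (c ^ 2 * (μc ^ 2) ^ 2 / 2) ≤ β / (16 * α) := by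
    calc (k : ℝ) * (c ^ 2 * (μc ^ 2) ^ 2 / 2) = c ^ 2 / 2 * (k * μc ^ 4) := by ring
      _ ≤ c ^ 2 / 2 * ((1 - a) ^ 2 * α ^ 3 / (32 * β)) :=
        mul_le_mul_of_nonneg_left hkμ (by positivity)
      _ = β / (16 * α) := by rw [hcdef]; field_simp; norm_num
  have hlin : c * ((1 - a) * α) = 2 * (β / α) := by rw [hcdef]; field_simp
  have hj : ∀ j : Fin N,
      ((((Finset.univ.erase j).powersetCard k).filter
        (fun I => α ≤ ∑ l ∈ I, (∑ t, φ l t * φ j t) ^ 2)).card : ℝ) ≤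
      Real.exp (-β / α) * ((Finset.univ.erase j).powersetCard k).card := by
    intro j
    set mean : ℝ := (1 / ((N : ℝ) - 1)) *
      ∑ i ∈ Finset.univ.erase j, (∑ t, φ i t * φ j t) ^ 2 with hmean
    have hb := card_filter_le (Finset.univ.erase j) (by rw [hcard]; omega)
      (fun i => (∑ t, φ i t * φ j t) ^ 2) (μc ^ 2) c mean α hc.le
      (fun _ _ => sq_nonneg _)
      (fun i hi => by
        rw [← sq_abs]
        exact pow_le_pow_left₀ (abs_nonneg _) (hμ_ub i j (Finset.ne_of_mem_erase hi)) 2)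
      (by rw [hcard, hcardR, hmean]; field_simp) k (by rw [hcard]; omega)
    refine hb.trans ?_
    rw [Finset.card_powersetCard, mul_comm]
    refine mul_le_mul_of_nonneg_right (Real.exp_le_exp.2 ?_) (Nat.cast_nonneg _)
    have hm : (k : ℝ) * mean ≤ a * α :=
      (mul_le_mul_of_nonneg_left (hμ2_ub j) (Nat.cast_nonneg _)).trans h2
    have hm' := mul_le_mul_of_nonneg_left hm hc.le
    have hpos : 0 < β / α := by positivity
    have h16 : β / (16 * α) = β / α / 16 := by rw [div_div, mul_comm]
    rw [neg_div]
    linarith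
  have hbad := card_pairs N k (fun I j => α ≤ ∑ l ∈ I, (∑ t, φ l t * φ j t) ^ 2)
  rw [card_all_pairs, hbad, Nat.cast_sum, Nat.cast_sum]
  refine (Finset.sum_le_sum fun j _ => hj j).trans ?_
  rw [← Finset.mul_sum]
  refine mul_le_mul_of_nonneg_right ?_ (Finset.sum_nonneg fun _ _ => Nat.cast_nonneg _)
  linarith [Real.exp_pos (-β / α)]
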